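/- With the notation of the previous statement (𝔽₂[ω₁,…,ω₈], φ(ωᵢ)=ωᵢ+ωᵢ², c_k = e_k of the eight E₈ linear forms), set θ₂ = c₂, θ₃ = c₃, θ₅ = c₅+ω₂c₄, θ₉ = ω₂²c₇+ω₂c₈+ω₂³c₆. Then the homogeneous component of polynomial degree 9 of φ(θ₅) equals θ₉ + c₄·θ₅ + (ω₂²c₄+c₆)·θ₃ + (ω₂²c₅+c₇)·θ₂. -/

import Mathlib

/-!
On the linear forms `tᵢ` the map `φ` is `x ↦ x + x²`, because squaring is additive in characteristic
two. Hence `φ (eₖ(t)) = eₖ(t + t²)`, and its components in the degrees that matter are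

* degree `2j` of `eⱼ(t + t²)`: `eⱼ(t)²`;
* degree `2j + 1` of `eⱼ₊₁(t + t²)`: `∑_{a ≤ j} eₐ(t) e_{2j+1-a}(t)` (a case of Wu's formula).

Both follow simultaneously by adjoining one linear form at a time
(`homogeneousComponent_esymm_add_sq`); the second needs a telescoping sum in characteristic two
(`sum_esymm_telescope`). For `θ₅ = c₅ + ω₂c₄` these formulas give
`∑_{a ≤ 4} cₐ c_{9-a} + ω₂ c₄² + ω₂² ∑_{a ≤ 3} cₐ c_{7-a}`, and the claim follows from `c₉ = 0`
and `c₁ = 3ω₂ = ω₂`.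
-/

open MvPolynomial

theorem multiset_esymm_zero {R : Type*} [CommRing R] (s : Multiset R) : s.esymm 0 = 1 := by
  simp [Multiset.esymm]

theorem multiset_esymm_cons_succ {R : Type*} [CommRing R] (x : R) (s : Multiset R) (k : ℕ) :
    (x ::ₘ s).esymm (k + 1) = s.esymm (k + 1) + x * s.esymm k := by
  simp [Multiset.esymm, Multiset.powersetCard_cons, Multiset.sum_map_mul_left]

theorem multiset_esymm_eq_zero {R : Type*} [CommRing R] (s : Multiset R) (k : ℕ)
    (h : s.card < k) : s.esymm k = 0 := by
  simp [Multiset.esymm, Multiset.powersetCard_eq_empty k h]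

/-- If `g` arises from the elementary symmetric functions `f` by adjoining a variable `x`, then in
characteristic two the terms linear in `x` of `∑_{a ≤ m} gₐ g_{N+1-a}` telescope to
`x fₘ f_{N-m}`. -/
theorem sum_esymm_telescope {R : Type*} [CommRing R] [CharP R 2] (f g : ℕ → R) (x : R)
    (h0 : g 0 = f 0) (hs : ∀ k, g (k + 1) = f (k + 1) + x * f k) (N m : ℕ) (hm : m ≤ N) :
    ∑ a ∈ Finset.range (m + 1), g a * g (N + 1 - a) =
      ∑ a ∈ Finset.range (m + 1), f a * f (N + 1 - a) + x * (f m * f (N - m))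
        + x ^ 2 * ∑ a ∈ Finset.range m, f a * f (N - 1 - a) := by
  induction m with
  | zero => simp [h0, hs]; ring
  | succ m ih =>
    rw [Finset.sum_range_succ, ih (by omega), Finset.sum_range_succ _ (m + 1),
      Finset.sum_range_succ _ m]
    obtain ⟨d, rfl⟩ : ∃ d, N = m + 1 + d := ⟨N - (m + 1), by omega⟩
    rw [show m + 1 + d + 1 - (m + 1) = d + 1 by omega, show m + 1 + d - m = d + 1 by omega,
      show m + 1 + d - (m + 1) = d by omega, hs, hs, Finset.sum_range_succ _ m,
      show m + 1 + d - 1 - m = d by omega]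
    linear_combination (x * f m * f (d + 1)) * CharTwo.two_eq_zero (R := R)

section
variable {σ : Type*} {R : Type*} [CommRing R]

theorem homogeneousComponent_linear_mul {x : MvPolynomial σ R} (hx : x.IsHomogeneous 1)
    (p : MvPolynomial σ R) (n : ℕ) :
    homogeneousComponent (n + 1) (x * p) = x * homogeneousComponent n p := by
  let _ : GradedAlgebra (homogeneousSubmodule σ R) := gradedAlgebra
  have h := DirectSum.coe_decompose_mul_add_of_left_mem (homogeneousSubmodule σ R) (i := 1)
    (j := n) (b := p) ((mem_homogeneousSubmodule 1 x).2 hx)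
  rw [add_comm] at h
  rw [← decomposition.decompose'_apply, ← decomposition.decompose'_apply]
  exact h

theorem homogeneousComponent_linear_mul_zero {x : MvPolynomial σ R} (hx : x.IsHomogeneous 1)
    (p : MvPolynomial σ R) :
    homogeneousComponent 0 (x * p) = 0 := by
  have h : coeff 0 x = 0 := hx.coeff_eq_zero (by simp)
  simp [homogeneousComponent_zero, ← constantCoeff_eq] at h ⊢
  simp [h]

theorem homogeneousComponent_linear_add_sq_mul {x : MvPolynomial σ R} (hx : x.IsHomogeneous 1)
    (p : MvPolynomial σ R) (n : ℕ) :
    homogeneousComponent (n + 2) ((x + x ^ 2) * p) =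
      x * homogeneousComponent (n + 1) p + x ^ 2 * homogeneousComponent n p := by
  rw [add_mul, map_add, homogeneousComponent_linear_mul hx, pow_two, mul_assoc,
    homogeneousComponent_linear_mul hx, homogeneousComponent_linear_mul hx, mul_assoc]

theorem homogeneousComponent_one_linear_add_sq_mul {x : MvPolynomial σ R}
    (hx : x.IsHomogeneous 1) (p : MvPolynomial σ R) :
    homogeneousComponent 1 ((x + x ^ 2) * p) = x * homogeneousComponent 0 p := by
  rw [add_mul, map_add, homogeneousComponent_linear_mul hx (n := 0), pow_two, mul_assoc,
    homogeneousComponent_linear_mul hx (n := 0), homogeneousComponent_linear_mul_zero hx]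
  simp

/-- The top two components of `eₖ(t + t²)`: degree `2j` for `k = j`, and degree `2j + 1` for
`k = j + 1`. The vanishing of `eⱼ(t + t²)` above degree `2j` is carried along for the induction
on the number of linear forms. -/
theorem homogeneousComponent_esymm_add_sq [CharP R 2] (s : Multiset (MvPolynomial σ R))
    (hs : ∀ x ∈ s, x.IsHomogeneous 1) (j : ℕ) :
    (∀ n, homogeneousComponent (2 * j + n + 1) ((s.map fun x => x + x ^ 2).esymm j) = 0) ∧
    homogeneousComponent (2 * j) ((s.map fun x => x + x ^ 2).esymm j) = s.esymm j ^ 2 ∧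
    homogeneousComponent (2 * j + 1) ((s.map fun x => x + x ^ 2).esymm (j + 1)) =
      ∑ a ∈ Finset.range (j + 1), s.esymm a * s.esymm (2 * j + 1 - a) := by
  have one_pos (n : ℕ) : homogeneousComponent (n + 1) (1 : MvPolynomial σ R) = 0 := by
    simpa using homogeneousComponent_of_mem (m := n + 1) (n := 0) (isHomogeneous_one σ R)
  have one_zero : homogeneousComponent 0 (1 : MvPolynomial σ R) = 1 := by
    simp [homogeneousComponent_zero]
  induction s using Multiset.induction generalizing j with
  | empty =>
    have e0 (k : ℕ) : (0 : Multiset (MvPolynomial σ R)).esymm (k + 1) = 0 :=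
      multiset_esymm_eq_zero _ _ (by simp)
    refine ⟨?_, ?_, ?_⟩
    · cases j <;> simp [multiset_esymm_zero, one_pos, e0]
    · cases j <;> simp [multiset_esymm_zero, one_zero, e0]
    · rw [Multiset.map_zero, e0, map_zero]
      refine (Finset.sum_eq_zero fun a ha => ?_).symm
      have ha := Finset.mem_range.1 ha
      rw [show 2 * j + 1 - a = (2 * j - a) + 1 by omega, e0, mul_zero]
  | cons x s ih =>
    have hx := hs x (Multiset.mem_cons_self x s)
    replace ih := ih fun y hy => hs y (Multiset.mem_cons_of_mem hy)
    have tele := sum_esymm_telescope (fun k => s.esymm k) (fun k => (x ::ₘ s).esymm k) x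
      (by simp [multiset_esymm_zero]) (fun k => multiset_esymm_cons_succ x s k) (2 * j) j (by omega)
    refine ⟨?_, ?_, ?_⟩
    · intro n
      cases j with
      | zero => simp [multiset_esymm_zero, one_pos]
      | succ i =>
        rw [Multiset.map_cons, multiset_esymm_cons_succ, map_add, (ih (i + 1)).1,
          show 2 * (i + 1) + n + 1 = (2 * i + n + 1) + 2 by ring,
          homogeneousComponent_linear_add_sq_mul hx, (ih i).1,
          show 2 * i + n + 1 + 1 = 2 * i + (n + 1) + 1 by ring, (ih i).1]
        ring
    · cases j with
      | zero => simp [multiset_esymm_zero, one_zero]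
      | succ i =>
        rw [Multiset.map_cons, multiset_esymm_cons_succ, map_add, (ih (i + 1)).2.1,
          show 2 * (i + 1) = 2 * i + 2 by ring,
          homogeneousComponent_linear_add_sq_mul hx, (ih i).1 0, (ih i).2.1,
          multiset_esymm_cons_succ, CharTwo.add_sq]
        ring
    · rw [tele, Multiset.map_cons, multiset_esymm_cons_succ, map_add, (ih j).2.2]
      cases j with
      | zero =>
        rw [show 2 * 0 + 1 = 1 by rfl, homogeneousComponent_one_linear_add_sq_mul hx]
        simp [multiset_esymm_zero, one_zero]
      | succ i =>
        rw [show 2 * (i + 1) + 1 = (2 * i + 1) + 2 by ring,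
          homogeneousComponent_linear_add_sq_mul hx, (ih i).2.2,
          show 2 * i + 1 + 1 = 2 * (i + 1) by ring, (ih (i + 1)).2.1,
          show 2 * (i + 1) - (i + 1) = i + 1 by omega,
          show 2 * (i + 1) - 1 = 2 * i + 1 by omega]
        ring
end

/-- Sq⁸θ₅ = θ₉ + c₄θ₅ + (ω₂²c₄+c₆)θ₃ + (ω₂²c₅+c₇)θ₂ for (E₈, 2):
the instance b_{5,9} = 1 of Lemma 2.2. -/
theorem stmt_13 :
    let ω : Fin 8 → MvPolynomial (Fin 8) (ZMod 2) := X
    let t : Fin 8 → MvPolynomial (Fin 8) (ZMod 2) :=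
      ![ω 7, ω 6 - ω 7, ω 5 - ω 6, ω 4 - ω 5, ω 3 - ω 4,
        ω 2 - ω 3 + ω 1, ω 0 - ω 2 + ω 1, -ω 0 + ω 1]
    let c : ℕ → MvPolynomial (Fin 8) (ZMod 2) :=
      fun k => aeval t (esymm (Fin 8) (ZMod 2) k)
    let φ : MvPolynomial (Fin 8) (ZMod 2) →ₐ[ZMod 2] MvPolynomial (Fin 8) (ZMod 2) :=
      aeval (fun i => X i + (X i) ^ 2)
    let θ₂ := c 2
    let θ₃ := c 3
    let θ₅ := c 5 + ω 1 * c 4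
    let θ₉ := (ω 1) ^ 2 * c 7 + ω 1 * c 8 + (ω 1) ^ 3 * c 6
    homogeneousComponent 9 (φ θ₅) =
      θ₉ + c 4 * θ₅ + ((ω 1) ^ 2 * c 4 + c 6) * θ₃
        + ((ω 1) ^ 2 * c 5 + c 7) * θ₂ := by
  intro ω t c φ θ₂ θ₃ θ₅ θ₉
  set s : Multiset (MvPolynomial (Fin 8) (ZMod 2)) := Finset.univ.val.map t with hs
  have hω (i : Fin 8) : (ω i).IsHomogeneous 1 := isHomogeneous_X _ i
  have hφω (i : Fin 8) : φ (ω i) = ω i + ω i ^ 2 := aeval_X _ i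
  have ht (i : Fin 8) : (t i).IsHomogeneous 1 := by
    fin_cases i
    · exact hω 7
    · exact (hω 6).sub (hω 7)
    · exact (hω 5).sub (hω 6)
    · exact (hω 4).sub (hω 5)
    · exact (hω 3).sub (hω 4)
    · exact ((hω 2).sub (hω 3)).add (hω 1)
    · exact ((hω 0).sub (hω 2)).add (hω 1)
    · exact (hω 0).neg.add (hω 1)
  have hφt (i : Fin 8) : φ (t i) = t i + t i ^ 2 := by
    fin_cases i <;>
      simp [t, hφω, CharTwo.sub_eq_add, CharTwo.neg_eq, CharTwo.add_sq, -map_sub, -map_neg] <;>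
      ring
  have hc (k : ℕ) : c k = s.esymm k := aeval_esymm_eq_multiset_esymm _ _ _ _
  have hφc (k : ℕ) : φ (c k) = (s.map fun x => x + x ^ 2).esymm k := by
    have h : φ (c k) = aeval (fun i => φ (t i)) (esymm (Fin 8) (ZMod 2) k) :=
      (comp_aeval_apply t φ _).symm ▸ rfl
    rw [h, aeval_esymm_eq_multiset_esymm, hs, Multiset.map_map]
    simp [hφt]
  have key := homogeneousComponent_esymm_add_sq s (by
    intro x hx
    obtain ⟨i, -, rfl⟩ := Multiset.mem_map.1 hx
    exact ht i)
  have h5 := (key 4).2.2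
  have h4 := (key 4).2.1
  have h3 := (key 3).2.2
  rw [← hφc] at h5 h4 h3
  simp only [← hc] at h5 h4 h3
  simp only [Finset.sum_range_succ, Finset.sum_range_zero] at h5 h3
  norm_num at h5 h4 h3
  have c0 : c 0 = 1 := by rw [hc, multiset_esymm_zero]
  have c9 : c 9 = 0 := by rw [hc]; exact multiset_esymm_eq_zero _ _ (by simp [s])
  have c1 : c 1 = ω 1 := by
    simp only [c, esymm_one, Fin.sum_univ_eight]
    simp [t]
    linear_combination (ω 1) * CharTwo.two_eq_zero (R := MvPolynomial (Fin 8) (ZMod 2))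
  simp only [θ₅, θ₉, θ₃, θ₂, map_add, map_mul, hφω]
  rw [homogeneousComponent_linear_add_sq_mul (hω 1), h5, h4, h3, c0, c1, c9]
  ring
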